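/- Let λ ∈ [1/3, 1/2) and let K ⊂ ℝ² be a nonempty compact set satisfying K = F₁(K) ∪ F₂(K) ∪ F₃(K) ∪ F₄(K), where F₁,…,F₄ are the similarity maps of the von Koch curve with parameter λ. Then the Hausdorff dimension of K satisfies dim_H(K) = −log 4 / log λ, and moreover −log 4 / log λ ≥ 2 − (4/log 2)·(1/2 − λ). -/

import Mathlib

open Metric Set MeasureTheory

noncomputable section

abbrev Plane := EuclideanSpace ℝ (Fin 2)

/-- An open axis-parallel cube in `ℝ^d` with side length `s`. -/
def IsCube {d : ℕ} (Q : Set (EuclideanSpace ℝ (Fin d))) (s : ℝ) : Prop :=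
  0 < s ∧ ∃ c : Fin d → ℝ, Q = {x | ∀ i, x i ∈ Set.Ioo (c i) (c i + s)}

/-- The curve condition with exponent `p` and constant `C`: any two points of the
complement of `Ω` can be joined by a unit-speed (1-Lipschitz) curve in the complement
along which the arclength integral of `dist(·, ∂Ω)^(1-p)` is at most `C‖z₁-z₂‖^(2-p)`. -/
def CurveCondition (Ω : Set Plane) (p C : ℝ) : Prop :=
  ∀ z₁ ∈ Ωᶜ, ∀ z₂ ∈ Ωᶜ, ∃ (L : ℝ) (γ : ℝ → Plane), 0 ≤ L ∧
    LipschitzOnWith 1 γ (Set.Icc 0 L) ∧ γ 0 = z₁ ∧ γ L = z₂ ∧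
    (∀ t ∈ Set.Icc (0:ℝ) L, γ t ∈ Ωᶜ) ∧
    (∫ t in (0:ℝ)..L, Metric.infDist (γ t) (frontier Ω) ^ (1 - p)) ≤ C * ‖z₁ - z₂‖ ^ (2 - p)

/-- `Ω` is a `J`-John domain: there is a center `x₀` such that every point can be joined
to `x₀` by a unit-speed (1-Lipschitz) curve `γ` in `Ω` with `dist(γ t, ∂Ω) ≥ J·t`. -/
def IsJohnDomain (Ω : Set Plane) (J : ℝ) : Prop :=
  ∃ x₀ ∈ Ω, ∀ x ∈ Ω, ∃ (ℓ : ℝ) (γ : ℝ → Plane), 0 ≤ ℓ ∧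
    LipschitzOnWith 1 γ (Set.Icc 0 ℓ) ∧ γ 0 = x ∧ γ ℓ = x₀ ∧
    (∀ t ∈ Set.Icc (0:ℝ) ℓ, γ t ∈ Ω ∧ J * t ≤ Metric.infDist (γ t) (frontier Ω))

/-- `Ω` is a Jordan domain: a bounded domain whose boundary is a homeomorphic
image of the circle. -/
def IsJordanDomain (Ω : Set Plane) : Prop :=
  IsOpen Ω ∧ IsConnected Ω ∧ Bornology.IsBounded Ω ∧
  ∃ f : (Metric.sphere (0 : Plane) 1) → Plane,
    Continuous f ∧ Function.Injective f ∧ Set.range f = frontier Ω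

/-- `E` is weakly mean porous with parameters `(α, lam)`: there is a pairwise disjoint
collection `D` of open cubes in the complement of `E` and a `j₀` such that for every
`x ∈ E` and `j ≥ j₀`, more than half of the scales `k ∈ {1,…,j}` admit at least `lam k`
cubes of `D` of side length at least `α(2^(-k))` inside the annulus
`B(x,2^(-k)) ∖ B(x,2^(-k-1))`. -/
def WeaklyMeanPorous {d : ℕ} (E : Set (EuclideanSpace ℝ (Fin d)))
    (α : ℝ → ℝ) (lam : ℕ → ℝ) : Prop :=
  ∃ (D : Set (Set (EuclideanSpace ℝ (Fin d)))) (j₀ : ℕ), 0 < j₀ ∧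
    (∀ Q ∈ D, (∃ s, IsCube Q s) ∧ Q ⊆ Eᶜ) ∧ D.Pairwise Disjoint ∧
    ∀ x ∈ E, ∀ j : ℕ, j₀ ≤ j →
      (j : ℝ) / 2 < ({k : ℕ | k ∈ Finset.Icc 1 j ∧
        ∃ S : Finset (Set (EuclideanSpace ℝ (Fin d))), lam k ≤ S.card ∧
          ∀ Q ∈ S, Q ∈ D ∧
            Q ⊆ Metric.ball x ((2:ℝ) ^ (-(k:ℝ))) \ Metric.ball x ((2:ℝ) ^ (-(k:ℝ) - 1)) ∧
            ∃ s, α ((2:ℝ) ^ (-(k:ℝ))) ≤ s ∧ IsCube Q s}).ncard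

/-- The point `(a,b)` of the Euclidean plane. -/
def pt (a b : ℝ) : Plane := (WithLp.equiv 2 (Fin 2 → ℝ)).symm ![a, b]

/-- Rotation of the plane by angle `τ` about the origin. -/
def rot (τ : ℝ) (x : Plane) : Plane :=
  pt (Real.cos τ * x 0 - Real.sin τ * x 1) (Real.sin τ * x 0 + Real.cos τ * x 1)

/-- The angle `θ ∈ (0,π)` with `cos θ = (1/2 - l)/l`. -/
def kochAngle (l : ℝ) : ℝ := Real.arccos ((1/2 - l) / l)

/-- The similarity maps `F₁, F₂, F₃, F₄` of the von Koch curve with parameter `l`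
(here `h = √(l - 1/4)`). -/
def kochF (l : ℝ) : Fin 4 → Plane → Plane :=
  ![fun x => l • x,
    fun x => rot (kochAngle l) (l • x) + pt l 0,
    fun x => rot (-kochAngle l) (l • x) + pt (1/2) (Real.sqrt (l - 1/4)),
    fun x => l • x + pt (1 - l) 0]

/-- The placement maps `G₁, G₂, G₃` for the snowflake domain. -/
def kochG : Fin 3 → Plane → Plane :=
  ![fun x => x,
    fun x => rot (-(2 * Real.pi / 3)) x + pt 1 0,
    fun x => rot (2 * Real.pi / 3) x + pt (1/2) (-(Real.sqrt 3 / 2))]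

/-- The union of the three placed copies of the Koch curve `K`, forming the
boundary of the snowflake. -/
def snowflakeBoundary (K : Set Plane) : Set Plane :=
  kochG 0 '' K ∪ kochG 1 '' K ∪ kochG 2 '' K

open Filter Topology
open scoped ENNReal NNReal

/-- Composition of the maps of an iterated function system along the first `n` digits. -/
def cylMap {N : ℕ} (g : Fin N → Plane → Plane) (d : ℕ → Fin N) : ℕ → Plane → Plane
  | 0 => id
  | n + 1 => cylMap g d n ∘ g (d n)

lemma cylMap_dist {N : ℕ} (g : Fin N → Plane → Plane) (d : ℕ → Fin N) (r : ℝ)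
    (hg : ∀ i x y, dist (g i x) (g i y) = r * dist x y) (n : ℕ) (x y : Plane) :
    dist (cylMap g d n x) (cylMap g d n y) = r ^ n * dist x y := by
  induction n generalizing x y with
  | zero => simp [cylMap]
  | succ n ih => simp only [cylMap, Function.comp, ih, hg]; ring

lemma cylMap_congr {N : ℕ} (g : Fin N → Plane → Plane) (d e : ℕ → Fin N) (n : ℕ)
    (h : ∀ i < n, d i = e i) : cylMap g d n = cylMap g e n := by
  induction n with
  | zero => rfl
  | succ n ih =>
    simp only [cylMap, ih (fun i hi => h i (by omega)), h n (by omega)]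

/-- Lower bound for strongly separated systems of similarities. -/
lemma le_dimH_of_separated {N : ℕ} (hN : 1 < N) (r : ℝ) (hr0 : 0 < r) (hr1 : r < 1)
    (g : Fin N → Plane → Plane) (hg : ∀ i x y, dist (g i x) (g i y) = r * dist x y)
    (K : Set Plane) (hne : K.Nonempty) (hK : IsCompact K) (hgK : ∀ i, g i '' K ⊆ K)
    (hdis : ∀ i j, i ≠ j → Disjoint (g i '' K) (g j '' K)) :
    ENNReal.ofReal (Real.log N / (-Real.log r)) ≤ dimH K := by
  have hgc : ∀ i, Continuous (g i) := fun i =>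
    (LipschitzWith.of_dist_le_mul (K := ⟨r, hr0.le⟩) (fun x y => (hg i x y).le)).continuous
  have hcc : ∀ d n, Continuous (cylMap g d n) := by
    intro d n
    induction n with
    | zero => exact continuous_id
    | succ n ih => exact ih.comp (hgc _)
  -- the coding points
  have hp : ∀ d : ℕ → Fin N, ∃ p, ∀ n, p ∈ cylMap g d n '' K := by
    intro d
    have := IsCompact.nonempty_iInter_of_sequence_nonempty_isCompact_isClosed
      (fun n => cylMap g d n '' K) (fun n => ?_) (fun n => hne.image _)
      (hK.image (hcc d 0)) (fun n => (hK.image (hcc d n)).isClosed)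
    · obtain ⟨p, hp⟩ := this
      exact ⟨p, fun n => Set.mem_iInter.1 hp n⟩
    · rw [cylMap, Set.image_comp]
      exact Set.image_mono (hgK _)
  choose p hp using hp
  -- uniform separation
  have hδ : ∃ δ > 0, ∀ i j, i ≠ j → ∀ x ∈ g i '' K, ∀ y ∈ g j '' K, δ ≤ dist x y := by
    have h1 : ∀ q : Fin N × Fin N, ∃ δ > (0 : ℝ), q.1 ≠ q.2 →
        ∀ x ∈ g q.1 '' K, ∀ y ∈ g q.2 '' K, δ ≤ dist x y := by
      rintro ⟨i, j⟩
      by_cases hij : i = j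
      · exact ⟨1, one_pos, fun h => absurd hij h⟩
      · obtain ⟨δ, hδ, h⟩ := exists_pos_forall_lt_edist (hK.image (hgc i))
          (hK.image (hgc j)).isClosed (hdis i j hij)
        refine ⟨δ, hδ, fun _ x hx y hy => ?_⟩
        have := (h x hx y hy).le
        rw [edist_nndist, ENNReal.coe_le_coe] at this
        exact_mod_cast this
    choose δ hδ h using h1
    have : Nonempty (Fin N × Fin N) := ⟨⟨⟨0, by omega⟩, ⟨0, by omega⟩⟩⟩
    obtain ⟨q, hq⟩ := Finite.exists_min δ
    exact ⟨δ q, hδ q, fun i j hij x hx y hy => (hq (i, j)).trans (h (i, j) hij x hx y hy)⟩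
  obtain ⟨δ, hδ0, hδ⟩ := hδ
  set s : ℝ := Real.log N / (-Real.log r) with hs
  have hlr : 0 < -Real.log r := by have := Real.log_neg hr0 hr1; linarith
  have hlN : 0 < Real.log N := Real.log_pos (by exact_mod_cast hN)
  have hs0 : 0 < s := div_pos hlN hlr
  have hrs : r ^ s = (N : ℝ)⁻¹ := by
    have hN0 : (0 : ℝ) < N := by positivity
    have h1 : Real.log r * s = -Real.log N := by
      have : Real.log r ≠ 0 := by linarith
      rw [hs]; field_simp
    rw [Real.rpow_def_of_pos hr0, h1, Real.exp_neg, Real.exp_log hN0]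
  -- key estimate
  have key : ∀ d e, |Real.ofDigits d - Real.ofDigits e| ≤ (δ⁻¹) ^ s * dist (p d) (p e) ^ s := by
    intro d e
    by_cases hde : d = e
    · subst hde; simp; positivity
    · have hex : ∃ k, d k ≠ e k := by
        by_contra hcon; push Not at hcon; exact hde (funext hcon)
      classical
      let k := Nat.find hex
      have hk : d k ≠ e k := Nat.find_spec hex
      have hlt : ∀ i < k, d i = e i := fun i hi => by
        have := Nat.find_min hex hi; push Not at this; exact this
      have h1 := Real.abs_ofDigits_sub_ofDigits_le hlt
      obtain ⟨x, hx, hxp⟩ := hp d (k + 1)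
      obtain ⟨y, hy, hyp⟩ := hp e (k + 1)
      simp only [cylMap, Function.comp] at hxp hyp
      rw [← cylMap_congr g d e k hlt] at hyp
      have h2 : dist (p d) (p e) = r ^ k * dist (g (d k) x) (g (e k) y) := by
        rw [← hxp, ← hyp, cylMap_dist g d r hg]
      have h3 := hδ _ _ hk _ (Set.mem_image_of_mem _ hx) _ (Set.mem_image_of_mem _ hy)
      have h4 : r ^ k ≤ δ⁻¹ * dist (p d) (p e) := by
        rw [h2, inv_mul_eq_div, le_div_iff₀ hδ0]
        exact mul_le_mul_of_nonneg_left h3 (by positivity)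
      calc _ ≤ _ := h1
        _ = (r ^ k) ^ s := by
          rw [← inv_pow, ← hrs, ← Real.rpow_natCast, ← Real.rpow_natCast, ← Real.rpow_mul hr0.le,
            ← Real.rpow_mul hr0.le, mul_comm]
        _ ≤ (δ⁻¹ * dist (p d) (p e)) ^ s := Real.rpow_le_rpow (by positivity) h4 hs0.le
        _ = _ := Real.mul_rpow (by positivity) dist_nonneg
  -- the inverse of the coding
  let h : Plane → ℝ := fun x => by
    classical
    exact if hx : ∃ d, p d = x then Real.ofDigits hx.choose else 0
  have hh : ∀ d, h (p d) = Real.ofDigits d := by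
    intro d
    have hx : ∃ d', p d' = p d := ⟨d, rfl⟩
    have e1 : h (p d) = Real.ofDigits hx.choose := dif_pos hx
    have := key hx.choose d
    rw [hx.choose_spec, dist_self, Real.zero_rpow hs0.ne', mul_zero] at this
    rw [e1]
    have := abs_nonpos_iff.1 this
    linarith
  have hhol : HolderOnWith (Real.toNNReal ((δ⁻¹) ^ s)) (Real.toNNReal s) h (Set.range p) := by
    rintro _ ⟨d, rfl⟩ _ ⟨e, rfl⟩
    rw [hh, hh, edist_dist, edist_dist, Real.coe_toNNReal s hs0.le,
      ENNReal.ofReal_rpow_of_nonneg dist_nonneg hs0.le]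
    change _ ≤ ENNReal.ofReal _ * _
    rw [← ENNReal.ofReal_mul (by positivity)]
    exact ENNReal.ofReal_le_ofReal (key d e)
  have h1 := hhol.dimH_image_le (Real.toNNReal_pos.2 hs0)
  have h2 : Set.Ico (0 : ℝ) 1 ⊆ h '' Set.range p := by
    intro x hx
    have : NeZero N := ⟨by omega⟩
    exact ⟨p (Real.digits x N), ⟨_, rfl⟩, by rw [hh]; exact Real.ofDigits_digits hN hx⟩
  have h3 : dimH (Set.Ico (0 : ℝ) 1) = 1 := by
    have := Real.dimH_of_nonempty_interior (E := ℝ) (s := Set.Ico (0 : ℝ) 1) (by simp)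
    simpa using this
  have h4 : Set.range p ⊆ K := by
    rintro _ ⟨d, rfl⟩
    simpa [cylMap] using hp d 0
  have h5 : (1 : ℝ≥0∞) ≤ dimH K / ENNReal.ofReal s := by
    rw [← h3]
    exact (dimH_mono h2).trans (h1.trans (ENNReal.div_le_div_right (dimH_mono h4) _))
  rwa [ENNReal.le_div_iff_mul_le (Or.inl (by simpa using hs0))
    (Or.inl ENNReal.ofReal_ne_top), one_mul] at h5

/-- Iterates of a system satisfying the open set condition. -/
lemma iterate_system (f : Fin 4 → Plane → Plane) (l : ℝ) (hl : 0 < l)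
    (hf : ∀ i x y, dist (f i x) (f i y) = l * dist x y)
    (K U : Set Plane) (hK : K = ⋃ i, f i '' K)
    (hU : ∀ i, f i '' U ⊆ U) (hdis : ∀ i j, i ≠ j → Disjoint (f i '' U) (f j '' U)) (n : ℕ) :
    ∃ g : Fin (4 ^ n) → Plane → Plane, (∀ i x y, dist (g i x) (g i y) = l ^ n * dist x y) ∧
      (K = ⋃ i, g i '' K) ∧ (∀ i, g i '' U ⊆ U) ∧
      (∀ i j, i ≠ j → Disjoint (g i '' U) (g j '' U)) := by
  induction n with
  | zero =>
    refine ⟨fun _ => id, by simp, ?_, by simp, ?_⟩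
    · ext x; simp
    · intro i j hij
      exact absurd (Subsingleton.elim (α := Fin 1) i j) hij
  | succ n ih =>
    obtain ⟨g, h1, h2, h3, h4⟩ := ih
    have hinj : ∀ i, Function.Injective (g i) := by
      intro i x y hxy
      have h5 := h1 i x y
      rw [hxy, dist_self] at h5
      have h6 : l ^ n ≠ 0 := by positivity
      exact dist_eq_zero.1 ((mul_eq_zero.1 h5.symm).resolve_left h6)
    let e : Fin (4 ^ (n + 1)) ≃ Fin (4 ^ n) × Fin 4 :=
      (finCongr (pow_succ 4 n)).trans finProdFinEquiv.symm
    refine ⟨fun k => g (e k).1 ∘ f (e k).2, ?_, ?_, ?_, ?_⟩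
    · intro i x y
      simp only [Function.comp, h1, hf]; ring
    · rw [e.surjective.iUnion_comp (fun q => (g q.1 ∘ f q.2) '' K), Set.iUnion_prod']
      simp only [Set.image_comp, ← Set.image_iUnion, ← hK]
      exact h2
    · intro k
      rw [Set.image_comp]
      exact (Set.image_mono (hU _)).trans (h3 _)
    · intro i j hij
      rw [Set.image_comp, Set.image_comp]
      by_cases h : (e i).1 = (e j).1
      · have h' : (e i).2 ≠ (e j).2 := fun h' => hij (e.injective (Prod.ext h h'))
        rw [h]
        exact (Set.disjoint_image_iff (hinj _)).2 (hdis _ _ h')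
      · exact (h4 _ _ h).mono (Set.image_mono (hU _)) (Set.image_mono (hU _))

/-- Upper bound for the dimension. -/
lemma dimH_le_of_system (f : Fin 4 → Plane → Plane) (l : ℝ) (hl : 0 < l) (hl1 : l < 1)
    (hf : ∀ i x y, dist (f i x) (f i y) = l * dist x y)
    (K : Set Plane) (hc : IsCompact K) (hK : K = ⋃ i, f i '' K) :
    dimH K ≤ ENNReal.ofReal (-Real.log 4 / Real.log l) := by
  have hll : Real.log l < 0 := Real.log_neg hl hl1
  have hl4 : 0 < Real.log 4 := Real.log_pos (by norm_num)
  set s : ℝ := -Real.log 4 / Real.log l with hs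
  have hs0 : 0 < s := div_pos_of_neg_of_neg (by linarith) hll
  have hls : l ^ s = (4 : ℝ)⁻¹ := by
    have h1 : Real.log l * s = -Real.log 4 := by
      have : Real.log l ≠ 0 := hll.ne
      rw [hs]; field_simp
    rw [Real.rpow_def_of_pos hl, h1, Real.exp_neg, Real.exp_log (by norm_num)]
  have hit := fun n => iterate_system f l hl hf K ∅ hK (by simp) (by simp) n
  choose g hg hgK _ _ using hit
  set D : ℝ := Metric.diam K with hD
  have hdiam : ∀ n i, ediam (g n i '' K) ≤ ENNReal.ofReal (l ^ n * D) := by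
    intro n i
    refine Metric.ediam_le ?_
    rintro _ ⟨x, hx, rfl⟩ _ ⟨y, hy, rfl⟩
    rw [edist_dist, hg]
    exact ENNReal.ofReal_le_ofReal (mul_le_mul_of_nonneg_left
      (Metric.dist_le_diam_of_mem hc.isBounded hx hy) (by positivity))
  have hD0 : 0 ≤ D := Metric.diam_nonneg
  have hfin : μH[s] K ≤ ENNReal.ofReal (D ^ s) := by
    refine (Measure.hausdorffMeasure_le_liminf_sum s K (l := atTop)
      (fun n : ℕ => ENNReal.ofReal (l ^ n * D)) ?_ (fun n i => g n i '' K)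
      (Eventually.of_forall hdiam) (Eventually.of_forall fun n => (hgK n).le)).trans ?_
    · have h1 : Tendsto (fun n : ℕ => l ^ n * D) atTop (𝓝 0) := by
        simpa using (tendsto_pow_atTop_nhds_zero_of_lt_one hl.le hl1).mul_const D
      simpa using ENNReal.tendsto_ofReal h1
    · have h2 : ∀ n : ℕ, ∑ i, ediam (g n i '' K) ^ s ≤ ENNReal.ofReal (D ^ s) := by
        intro n
        calc ∑ i, ediam (g n i '' K) ^ s
            ≤ ∑ _i : Fin (4 ^ n), ENNReal.ofReal ((l ^ n * D) ^ s) := by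
              refine Finset.sum_le_sum fun i _ => ?_
              rw [← ENNReal.ofReal_rpow_of_nonneg (by positivity) hs0.le]
              exact ENNReal.rpow_le_rpow (hdiam n i) hs0.le
          _ = ENNReal.ofReal (D ^ s) := by
              rw [Finset.sum_const, Finset.card_univ, Fintype.card_fin, nsmul_eq_mul,
                ← ENNReal.ofReal_natCast, ← ENNReal.ofReal_mul (by positivity)]
              congr 1
              have h3 : (l ^ n) ^ s = ((4 : ℝ) ^ n)⁻¹ := by
                rw [← inv_pow, ← hls, ← Real.rpow_natCast, ← Real.rpow_natCast,
                  ← Real.rpow_mul hl.le, ← Real.rpow_mul hl.le, mul_comm]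
              rw [Real.mul_rpow (by positivity) hD0, h3]
              push_cast
              field_simp
      calc _ ≤ liminf (fun _ : ℕ => ENNReal.ofReal (D ^ s)) atTop :=
            liminf_le_liminf (Eventually.of_forall h2)
        _ = _ := liminf_const _
  have h5 := dimH_le_of_hausdorffMeasure_ne_top (s := K) (d := Real.toNNReal s)
    (by rw [Real.coe_toNNReal s hs0.le]; exact ne_top_of_le_ne_top ENNReal.ofReal_ne_top hfin)
  exact h5

/-- Lower bound for the dimension under the open set condition. -/
lemma le_dimH_of_system (f : Fin 4 → Plane → Plane) (l : ℝ) (hl : 0 < l) (hl1 : l < 1)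
    (hf : ∀ i x y, dist (f i x) (f i y) = l * dist x y)
    (K U : Set Plane) (hc : IsCompact K) (hK : K = ⋃ i, f i '' K) (hUo : IsOpen U)
    (hU : ∀ i, f i '' U ⊆ U) (hdis : ∀ i j, i ≠ j → Disjoint (f i '' U) (f j '' U))
    (x₀ : Plane) (hx₀ : x₀ ∈ K) (hx₀U : x₀ ∈ U) :
    ENNReal.ofReal (-Real.log 4 / Real.log l) ≤ dimH K := by
  have hll : Real.log l < 0 := Real.log_neg hl hl1
  have hl4 : 0 < Real.log 4 := Real.log_pos (by norm_num)
  have hne : K.Nonempty := ⟨x₀, hx₀⟩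
  obtain ⟨ε, hε, hball⟩ := Metric.isOpen_iff.1 hUo x₀ hx₀U
  -- a cell inside `U`
  have hv : ∃ (m : ℕ) (v : Plane → Plane), (∀ x y, dist (v x) (v y) = l ^ m * dist x y) ∧
      v '' K ⊆ K ∧ v '' K ⊆ U := by
    have h1 : Tendsto (fun n : ℕ => l ^ n * Metric.diam K) atTop (𝓝 0) := by
      simpa using (tendsto_pow_atTop_nhds_zero_of_lt_one hl.le hl1).mul_const (Metric.diam K)
    obtain ⟨m, hm⟩ := (h1.eventually (gt_mem_nhds hε)).exists
    obtain ⟨g, hg, hgK, _, _⟩ := iterate_system f l hl hf K U hK hU hdis m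
    have hx := hx₀
    rw [hgK] at hx
    obtain ⟨i, y, hy, hyx⟩ := Set.mem_iUnion.1 hx
    refine ⟨m, g i, hg i, ?_, ?_⟩
    · conv_rhs => rw [hgK]
      exact Set.subset_iUnion (fun i => g i '' K) i
    · rintro _ ⟨z, hz, rfl⟩
      apply hball
      rw [Metric.mem_ball, ← hyx, hg]
      exact (mul_le_mul_of_nonneg_left
        (Metric.dist_le_diam_of_mem hc.isBounded hz hy) (by positivity)).trans_lt hm
  obtain ⟨m, v, hvd, hvK, hvU⟩ := hv
  have hmain : ∀ n : ℕ, 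
      ENNReal.ofReal ((-Real.log 4 / Real.log l) * (((n + 1 : ℕ) : ℝ) / ((n + 1 : ℕ) + m)))
        ≤ dimH K := by
    intro n
    obtain ⟨g, hg, hgK, hgU, hgd⟩ := iterate_system f l hl hf K U hK hU hdis (n + 1)
    have hgK' : ∀ i, g i '' K ⊆ K := fun i => by
      conv_rhs => rw [hgK]
      exact Set.subset_iUnion (fun i => g i '' K) i
    have h := le_dimH_of_separated (N := 4 ^ (n + 1)) (Nat.one_lt_pow (by omega) (by norm_num))
      (l ^ (n + 1 + m)) (by positivity) (pow_lt_one₀ hl.le hl1 (by omega))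
      (fun i => g i ∘ v) (fun i x y => by simp only [Function.comp, hg, hvd]; ring) K hne hc
      (fun i => by rw [Set.image_comp]; exact (Set.image_mono hvK).trans (hgK' i))
      (fun i j hij => by
        rw [Set.image_comp, Set.image_comp]
        exact (hgd i j hij).mono (Set.image_mono hvU) (Set.image_mono hvU))
    convert! h using 2
    push_cast
    rw [Real.log_pow, Real.log_pow]
    push_cast
    have : Real.log l ≠ 0 := hll.ne
    field_simp
  have hlim : Tendsto (fun n : ℕ => (-Real.log 4 / Real.log l) *
      (((n + 1 : ℕ) : ℝ) / ((n + 1 : ℕ) + m))) atTop (𝓝 (-Real.log 4 / Real.log l * 1)) := by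
    refine Tendsto.const_mul _ ?_
    exact (tendsto_natCast_div_add_atTop (m : ℝ)).comp (tendsto_add_atTop_nat 1)
  rw [mul_one] at hlim
  exact le_of_tendsto (ENNReal.tendsto_ofReal hlim) (Eventually.of_forall hmain)

lemma kochAngle_cos (l : ℝ) (hl1 : 1/3 ≤ l) (hl2 : l < 1/2) :
    l * Real.cos (kochAngle l) = 1/2 - l := by
  have h0 : 0 < l := by linarith
  rw [kochAngle, Real.cos_arccos]
  · field_simp
  · rw [le_div_iff₀ h0]; linarith
  · rw [div_le_iff₀ h0]; linarith

lemma kochAngle_sin (l : ℝ) (hl1 : 1/3 ≤ l) (hl2 : l < 1/2) :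
    l * Real.sin (kochAngle l) = Real.sqrt (l - 1/4) := by
  have h0 : 0 < l := by linarith
  rw [kochAngle, Real.sin_arccos]
  conv_lhs => rw [← Real.sqrt_sq h0.le]
  rw [← Real.sqrt_mul (by positivity), Real.sqrt_sq h0.le]
  congr 1
  field_simp
  ring

@[simp] lemma pt_zero (a b : ℝ) : pt a b 0 = a := rfl
@[simp] lemma pt_one (a b : ℝ) : pt a b 1 = b := rfl

lemma kochF_coords (l : ℝ) (hl1 : 1/3 ≤ l) (hl2 : l < 1/2) (x : Plane) :
    (kochF l 0 x 0 = l * x 0 ∧ kochF l 0 x 1 = l * x 1) ∧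
    (kochF l 1 x 0 = l + (1/2 - l) * x 0 - Real.sqrt (l - 1/4) * x 1 ∧
      kochF l 1 x 1 = Real.sqrt (l - 1/4) * x 0 + (1/2 - l) * x 1) ∧
    (kochF l 2 x 0 = 1/2 + (1/2 - l) * x 0 + Real.sqrt (l - 1/4) * x 1 ∧
      kochF l 2 x 1 = Real.sqrt (l - 1/4) - Real.sqrt (l - 1/4) * x 0 + (1/2 - l) * x 1) ∧
    (kochF l 3 x 0 = 1 - l + l * x 0 ∧ kochF l 3 x 1 = l * x 1) := by
  have hc := kochAngle_cos l hl1 hl2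
  have hs := kochAngle_sin l hl1 hl2
  rw [← hc]
  refine ⟨⟨?_, ?_⟩, ⟨?_, ?_⟩, ⟨?_, ?_⟩, ⟨?_, ?_⟩⟩ <;>
    simp [kochF, rot, -one_div] <;> first
    | ring1
    | linear_combination x 0 * hs
    | linear_combination -x 0 * hs
    | linear_combination x 1 * hs
    | linear_combination -x 1 * hs

lemma kochF_dist (l : ℝ) (hl1 : 1/3 ≤ l) (hl2 : l < 1/2) (i : Fin 4) (x y : Plane) :
    dist (kochF l i x) (kochF l i y) = l * dist x y := by
  have hl : 0 < l := by linarith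
  obtain ⟨⟨a0, a1⟩, ⟨b0, b1⟩, ⟨c0, c1⟩, ⟨d0, d1⟩⟩ := kochF_coords l hl1 hl2 x
  obtain ⟨⟨a0', a1'⟩, ⟨b0', b1'⟩, ⟨c0', c1'⟩, ⟨d0', d1'⟩⟩ := kochF_coords l hl1 hl2 y
  have hh : Real.sqrt (l - 1/4) ^ 2 = l - 1/4 := Real.sq_sqrt (by linarith)
  rw [EuclideanSpace.dist_eq, EuclideanSpace.dist_eq]
  conv_rhs => rw [← Real.sqrt_sq hl.le]
  rw [← Real.sqrt_mul (by positivity)]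
  congr 1
  simp only [Fin.sum_univ_two, Real.dist_eq, sq_abs]
  fin_cases i
  · change (kochF l 0 x 0 - kochF l 0 y 0) ^ 2 + (kochF l 0 x 1 - kochF l 0 y 1) ^ 2 = _
    rw [a0, a1, a0', a1']; ring
  · change (kochF l 1 x 0 - kochF l 1 y 0) ^ 2 + (kochF l 1 x 1 - kochF l 1 y 1) ^ 2 = _
    rw [b0, b1, b0', b1']
    linear_combination ((x 0 - y 0) ^ 2 + (x 1 - y 1) ^ 2) * hh
  · change (kochF l 2 x 0 - kochF l 2 y 0) ^ 2 + (kochF l 2 x 1 - kochF l 2 y 1) ^ 2 = _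
    rw [c0, c1, c0', c1']
    linear_combination ((x 0 - y 0) ^ 2 + (x 1 - y 1) ^ 2) * hh
  · change (kochF l 3 x 0 - kochF l 3 y 0) ^ 2 + (kochF l 3 x 1 - kochF l 3 y 1) ^ 2 = _
    rw [d0, d1, d0', d1']; ring

/-- The open triangle witnessing the open set condition. -/
def kochTri (h : ℝ) : Set Plane :=
  {x | 0 < x 1 ∧ x 1 < 2 * h * x 0 ∧ x 1 < 2 * h * (1 - x 0)}

lemma kochTri_open (h : ℝ) : IsOpen (kochTri h) := by
  have c0 : Continuous fun x : Plane => x 0 := by fun_prop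
  have c1 : Continuous fun x : Plane => x 1 := by fun_prop
  exact (isOpen_lt continuous_const c1).inter ((isOpen_lt c1 (by fun_prop)).inter
    (isOpen_lt c1 (by fun_prop)))

lemma kochTri_maps (l : ℝ) (hl1 : 1/3 ≤ l) (hl2 : l < 1/2) (i : Fin 4) :
    kochF l i '' kochTri (Real.sqrt (l - 1/4)) ⊆ kochTri (Real.sqrt (l - 1/4)) := by
  have hl : 0 < l := by linarith
  rintro _ ⟨x, ⟨h1, h2, h3⟩, rfl⟩
  obtain ⟨⟨a0, a1⟩, ⟨b0, b1⟩, ⟨c0, c1⟩, ⟨d0, d1⟩⟩ := kochF_coords l hl1 hl2 x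
  have hh : Real.sqrt (l - 1/4) ^ 2 = l - 1/4 := Real.sq_sqrt (by linarith)
  have hpos : 0 < Real.sqrt (l - 1/4) := Real.sqrt_pos.2 (by linarith)
  set h := Real.sqrt (l - 1/4)
  have hx0 : 0 < x 0 := by
    by_contra hc; nlinarith
  have hx1 : 0 < 1 - x 0 := by
    by_contra hc; nlinarith
  have e1 : h * h * x 1 = (l - 1/4) * x 1 := by rw [← sq, hh]
  have p1 : 0 < h * x 0 := by positivity
  have p2 : 0 < h * (1 - x 0) := by positivity
  have p3 : 0 < (1/2 - l) * x 1 := mul_pos (by linarith) h1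
  have p4 : 0 ≤ (3 * l - 1) * x 1 := mul_nonneg (by linarith) h1.le
  have p5 : 0 < l * (2 * h * (1 - x 0) - x 1) := mul_pos hl (by linarith)
  have p6 : 0 < l * (2 * h * x 0 - x 1) := mul_pos hl (by linarith)
  have p7 : 0 < (1 - l) * (h * (1 - x 0)) := mul_pos (by linarith) p2
  have p8 : 0 < (1 - l) * (h * x 0) := mul_pos (by linarith) p1
  have p9 : 0 < (1 - 2 * l) * h := mul_pos (by linarith) hpos
  have p10 : 0 < l * x 1 := by positivity
  fin_cases i
  · change 0 < kochF l 0 x 1 ∧ kochF l 0 x 1 < 2 * h * kochF l 0 x 0 ∧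
      kochF l 0 x 1 < 2 * h * (1 - kochF l 0 x 0)
    rw [a0, a1]
    refine ⟨?_, ?_, ?_⟩ <;> linarith
  · change 0 < kochF l 1 x 1 ∧ kochF l 1 x 1 < 2 * h * kochF l 1 x 0 ∧
      kochF l 1 x 1 < 2 * h * (1 - kochF l 1 x 0)
    rw [b0, b1]
    refine ⟨?_, ?_, ?_⟩ <;> linarith
  · change 0 < kochF l 2 x 1 ∧ kochF l 2 x 1 < 2 * h * kochF l 2 x 0 ∧
      kochF l 2 x 1 < 2 * h * (1 - kochF l 2 x 0)
    rw [c0, c1]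
    refine ⟨?_, ?_, ?_⟩ <;> linarith
  · change 0 < kochF l 3 x 1 ∧ kochF l 3 x 1 < 2 * h * kochF l 3 x 0 ∧
      kochF l 3 x 1 < 2 * h * (1 - kochF l 3 x 0)
    rw [d0, d1]
    refine ⟨?_, ?_, ?_⟩ <;> linarith

/-- Locations of the four images of the triangle. -/
lemma kochTri_sep (l : ℝ) (hl1 : 1/3 ≤ l) (hl2 : l < 1/2) (x : Plane)
    (hx : x ∈ kochTri (Real.sqrt (l - 1/4))) :
    (kochF l 0 x 0 < 1/2 ∧ kochF l 0 x 1 < 2 * Real.sqrt (l - 1/4) * (l - kochF l 0 x 0)) ∧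
    (kochF l 1 x 0 < 1/2 ∧ 2 * Real.sqrt (l - 1/4) * (l - kochF l 1 x 0) < kochF l 1 x 1) ∧
    (1/2 < kochF l 2 x 0 ∧
      2 * Real.sqrt (l - 1/4) * (l - (1 - kochF l 2 x 0)) < kochF l 2 x 1) ∧
    (1/2 < kochF l 3 x 0 ∧
      kochF l 3 x 1 < 2 * Real.sqrt (l - 1/4) * (l - (1 - kochF l 3 x 0))) := by
  have hl : 0 < l := by linarith
  obtain ⟨h1, h2, h3⟩ := hx
  obtain ⟨⟨a0, a1⟩, ⟨b0, b1⟩, ⟨c0, c1⟩, ⟨d0, d1⟩⟩ := kochF_coords l hl1 hl2 x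
  have hh : Real.sqrt (l - 1/4) ^ 2 = l - 1/4 := Real.sq_sqrt (by linarith)
  have hpos : 0 < Real.sqrt (l - 1/4) := Real.sqrt_pos.2 (by linarith)
  rw [a0, a1, b0, b1, c0, c1, d0, d1]
  set h := Real.sqrt (l - 1/4)
  have hx0 : 0 < x 0 := by
    by_contra hc; nlinarith
  have hx1 : 0 < 1 - x 0 := by
    by_contra hc; nlinarith
  have e1 : h * h * x 1 = (l - 1/4) * x 1 := by rw [← sq, hh]
  have q1 : 0 < l * x 0 := by positivity
  have q2 : 0 < l * (1 - x 0) := by positivity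
  have q3 : 0 < (1/2 - l) * x 0 := mul_pos (by linarith) hx0
  have q4 : 0 < (1/2 - l) * (1 - x 0) := mul_pos (by linarith) hx1
  have q5 : 0 < h * x 1 := by positivity
  have q6 : 0 < l * (2 * h * (1 - x 0) - x 1) := mul_pos hl (by linarith)
  have q7 : 0 < l * (2 * h * x 0 - x 1) := mul_pos hl (by linarith)
  have q8 : 0 ≤ (3 * l - 1) * (2 * h * x 0 - x 1) := mul_nonneg (by linarith) (by linarith)
  have q9 : 0 ≤ (3 * l - 1) * (2 * h * (1 - x 0) - x 1) := mul_nonneg (by linarith) (by linarith)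
  have q10 : 0 < (1/2 - l) * (h * x 0) := mul_pos (by linarith) (by positivity)
  have q11 : 0 < (1/2 - l) * (h * (1 - x 0)) := mul_pos (by linarith) (by positivity)
  refine ⟨⟨?_, ?_⟩, ⟨?_, ?_⟩, ⟨?_, ?_⟩, ⟨?_, ?_⟩⟩ <;> linarith

lemma kochTri_disjoint (l : ℝ) (hl1 : 1/3 ≤ l) (hl2 : l < 1/2) (i j : Fin 4) (hij : i ≠ j) :
    Disjoint (kochF l i '' kochTri (Real.sqrt (l - 1/4)))
      (kochF l j '' kochTri (Real.sqrt (l - 1/4))) := by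
  rw [Set.disjoint_left]
  rintro _ ⟨x, hx, rfl⟩ ⟨y, hy, hxy⟩
  obtain ⟨⟨a0, a1⟩, ⟨b0, b1⟩, ⟨c0, c1⟩, ⟨d0, d1⟩⟩ := kochTri_sep l hl1 hl2 x hx
  obtain ⟨⟨a0', a1'⟩, ⟨b0', b1'⟩, ⟨c0', c1'⟩, ⟨d0', d1'⟩⟩ := kochTri_sep l hl1 hl2 y hy
  fin_cases i <;> fin_cases j <;> first
    | exact absurd rfl hij
    | (simp only [Fin.zero_eta, Fin.mk_one, Fin.reduceFinMk] at hxy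
       simp only [hxy] at a0' a1' b0' b1' c0' c1' d0' d1'
       linarith)

lemma koch_ineq (l : ℝ) (hl1 : 1/3 ≤ l) (hl2 : l < 1/2) :
    2 - 4 / Real.log 2 * (1/2 - l) ≤ -Real.log 4 / Real.log l := by
  have hl : 0 < l := by linarith
  have hL : 0 < Real.log 2 := Real.log_pos (by norm_num)
  have hL1 : Real.log 2 < 1 := by have := Real.log_two_lt_d9; linarith
  have hL2 : 0.6 < Real.log 2 := by have := Real.log_two_gt_d9; linarith
  have h4 : Real.log 4 = 2 * Real.log 2 := by
    rw [show (4 : ℝ) = 2 ^ 2 by norm_num, Real.log_pow]; norm_num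
  have hv := Real.log_le_sub_one_of_pos (show 0 < (2 * l)⁻¹ by positivity)
  rw [Real.log_inv, Real.log_mul (by norm_num) hl.ne'] at hv
  have hneg : Real.log l < 0 := Real.log_neg hl (by linarith)
  set L := Real.log 2
  set v := -Real.log l - L with hvdef
  have e : Real.log l = -(L + v) := by rw [hvdef]; ring
  rw [h4, e]
  have hLv : 0 < L + v := by linarith
  have hv' : v * (2 * l) ≤ 1 - 2 * l := by
    have h1 : v ≤ (2 * l)⁻¹ - 1 := by linarith
    calc v * (2 * l) ≤ ((2 * l)⁻¹ - 1) * (2 * l) :=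
          mul_le_mul_of_nonneg_right h1 (by positivity)
      _ = 1 - 2 * l := by field_simp
  rw [neg_div_neg_eq, le_div_iff₀ hLv]
  have key : v * (L - (1 - 2 * l)) ≤ (1 - 2 * l) * L := by
    have hp : 0 < L - (1 - 2 * l) := by linarith
    have h1 : v * (2 * l) * (L - (1 - 2 * l)) ≤ (1 - 2 * l) * (L - (1 - 2 * l)) :=
      mul_le_mul_of_nonneg_right hv' hp.le
    have h2 : (1 - 2 * l) * (L - (1 - 2 * l)) ≤ (1 - 2 * l) * (2 * l * L) := by
      refine mul_le_mul_of_nonneg_left ?_ (by linarith)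
      nlinarith
    have h3 : (2 * l) * (v * (L - (1 - 2 * l))) ≤ (2 * l) * ((1 - 2 * l) * L) := by linarith
    exact le_of_mul_le_mul_left h3 (by positivity)
  have : (2 - 4 / L * (1/2 - l)) * (L + v) = 2 * L + 2 * (v * (L - (1 - 2 * l)) - (1 - 2 * l) * L) / L := by
    field_simp
    ring
  rw [this]
  have : 2 * (v * (L - (1 - 2 * l)) - (1 - 2 * l) * L) / L ≤ 0 :=
    div_nonpos_of_nonpos_of_nonneg (by linarith) hL.le
  linarith

/-- **Dimension of the von Koch curve.** For `λ ∈ [1/3, 1/2)`, the attractor `K` of the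
von Koch iterated function system with parameter `λ` has Hausdorff dimension
`-log 4 / log λ`, and `-log 4 / log λ ≥ 2 - (4/log 2)·(1/2 - λ)`. -/
theorem koch_dimH (l : ℝ) (hl1 : 1/3 ≤ l) (hl2 : l < 1/2)
    (K : Set Plane) (hne : K.Nonempty) (hcomp : IsCompact K)
    (hK : K = kochF l 0 '' K ∪ kochF l 1 '' K ∪ kochF l 2 '' K ∪ kochF l 3 '' K) :
    dimH K = ENNReal.ofReal (-Real.log 4 / Real.log l) ∧
      2 - 4 / Real.log 2 * (1/2 - l) ≤ -Real.log 4 / Real.log l := by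
  have hl : 0 < l := by linarith
  refine ⟨?_, koch_ineq l hl1 hl2⟩
  have hK' : K = ⋃ i, kochF l i '' K := by
    conv_lhs => rw [hK]
    ext x
    simp only [Set.mem_union, Set.mem_iUnion, Fin.exists_fin_succ]
    simp [or_assoc]
  have hmem : ∀ i, ∀ x ∈ K, kochF l i x ∈ K := by
    intro i x hx
    rw [hK']
    exact Set.mem_iUnion.2 ⟨i, x, hx, rfl⟩
  have hzero : (0 : Plane) ∈ K := by
    obtain ⟨x, hx⟩ := hne
    have h1 : ∀ n : ℕ, l ^ n • x ∈ K := by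
      intro n
      induction n with
      | zero => simpa using hx
      | succ n ih =>
        have := hmem 0 _ ih
        change l • (l ^ n • x) ∈ K at this
        rwa [smul_smul, ← pow_succ'] at this
    have h2 : Tendsto (fun n : ℕ => l ^ n • x) atTop (𝓝 ((0 : ℝ) • x)) :=
      (tendsto_pow_atTop_nhds_zero_of_lt_one hl.le (by linarith)).smul_const x
    rw [zero_smul] at h2
    exact hcomp.isClosed.mem_of_tendsto h2 (Eventually.of_forall h1)
  refine le_antisymm
    (dimH_le_of_system (kochF l) l hl (by linarith) (kochF_dist l hl1 hl2) K hcomp hK')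
    (le_dimH_of_system (kochF l) l hl (by linarith) (kochF_dist l hl1 hl2) K
      (kochTri (Real.sqrt (l - 1/4))) hcomp hK' (kochTri_open _) (kochTri_maps l hl1 hl2)
      (kochTri_disjoint l hl1 hl2) (kochF l 1 (kochF l 1 0)) (hmem 1 _ (hmem 1 _ hzero)) ?_)
  have hpos : 0 < Real.sqrt (l - 1/4) := Real.sqrt_pos.2 (by linarith)
  obtain ⟨-, ⟨b0, b1⟩, -, -⟩ := kochF_coords l hl1 hl2 0
  obtain ⟨-, ⟨b0', b1'⟩, -, -⟩ := kochF_coords l hl1 hl2 (kochF l 1 0)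
  rw [b0, b1] at b0' b1'
  simp only [PiLp.zero_apply, mul_zero, add_zero, sub_zero] at b0' b1'
  change 0 < kochF l 1 (kochF l 1 0) 1 ∧ _ < _ * kochF l 1 (kochF l 1 0) 0 ∧
    kochF l 1 (kochF l 1 0) 1 < _ * (1 - kochF l 1 (kochF l 1 0) 0)
  rw [b0', b1']
  set h := Real.sqrt (l - 1/4)
  have r1 : 0 < h * l := by positivity
  have r2 : 0 < h * l * (1/2 - l) := mul_pos r1 (by linarith)
  have r3 : 0 < h * (1 - l) ^ 2 := mul_pos hpos (by nlinarith)
  refine ⟨?_, ?_, ?_⟩ <;> nlinarith
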